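/- arXiv:2301.03735 — 4 statements merged into one kernel-verified Lean document; each statement's English description precedes it below -/
import Mathlib

section
/- If T and U are weak multipliers of A, then the pointwise sum T + U, the scalar multiple k • T (for any k ∈ K), and the Jordan product T ∘ U + U ∘ T (the pointwise sum of the two composites) are weak multipliers of A. -/
/-- A function `T : A → A` is a weak multiplier of `A` if
`x * T y = T x * y` for all `x, y`. -/
def IsWeakMultiplier {A : Type*} [Mul A] (T : A → A) : Prop :=
  ∀ x y : A, x * T y = T x * y

/-!
Moving a composite of weak multipliers across a product reverses it: `x * T (U y) = U (T x) * y`.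
The Jordan product is symmetric under this reversal.
-/

namespace IsWeakMultiplier

variable {A : Type*} [Mul A] {T U : A → A}

theorem mul_comp_apply (hT : IsWeakMultiplier T) (hU : IsWeakMultiplier U) (x y : A) :
    x * (T ∘ U) y = (U ∘ T) x * y :=
  calc
    x * T (U y) = T x * U y := hT x (U y)
    _ = U (T x) * y := hU (T x) y

theorem add [Add A] [LeftDistribClass A] [RightDistribClass A]
    (hT : IsWeakMultiplier T) (hU : IsWeakMultiplier U) : IsWeakMultiplier (T + U) :=
  fun x y ↦ calc
    x * (T y + U y) = x * T y + x * U y := mul_add _ _ _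
    _ = T x * y + U x * y := by rw [hT x y, hU x y]
    _ = (T x + U x) * y := (add_mul _ _ _).symm

theorem const_smul {M : Type*} [SMul M A] [SMulCommClass M A A] [IsScalarTower M A A]
    (hT : IsWeakMultiplier T) (k : M) : IsWeakMultiplier (k • T) :=
  fun x y ↦ calc
    x * (k • T y) = k • (x * T y) := mul_smul_comm _ _ _
    _ = k • (T x * y) := by rw [hT x y]
    _ = (k • T x) * y := (smul_mul_assoc _ _ _).symm

theorem comp_add_comp [AddCommMagma A] [LeftDistribClass A] [RightDistribClass A]
    (hT : IsWeakMultiplier T) (hU : IsWeakMultiplier U) :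
    IsWeakMultiplier (T ∘ U + U ∘ T) :=
  fun x y ↦ calc
    x * ((T ∘ U) y + (U ∘ T) y) = x * (T ∘ U) y + x * (U ∘ T) y := mul_add _ _ _
    _ = (U ∘ T) x * y + (T ∘ U) x * y := by
      rw [hT.mul_comp_apply hU, hU.mul_comp_apply hT]
    _ = (T ∘ U) x * y + (U ∘ T) x * y := add_comm _ _
    _ = ((T ∘ U) x + (U ∘ T) x) * y := (add_mul _ _ _).symm

end IsWeakMultiplier

theorem sum_smul_jordan_weakMultiplier_general
    {M A : Type*} [Mul A] [AddCommMagma A] [LeftDistribClass A] [RightDistribClass A]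
    [SMul M A] [SMulCommClass M A A] [IsScalarTower M A A]
    (T U : A → A) (hT : IsWeakMultiplier T) (hU : IsWeakMultiplier U) (k : M) :
    IsWeakMultiplier (fun x => T x + U x) ∧
    IsWeakMultiplier (fun x => k • T x) ∧
    IsWeakMultiplier (fun x => T (U x) + U (T x)) :=
  ⟨hT.add hU, hT.const_smul k, hT.comp_add_comp hU⟩

theorem sum_smul_jordan_weakMultiplier
    {K A : Type*} [Field K] [NonUnitalNonAssocRing A] [Module K A]
    [SMulCommClass K A A] [IsScalarTower K A A]
    (T U : A → A) (hT : IsWeakMultiplier T) (hU : IsWeakMultiplier U) (k : K) :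
    IsWeakMultiplier (fun x => T x + U x) ∧
    IsWeakMultiplier (fun x => k • T x) ∧
    IsWeakMultiplier (fun x => T (U x) + U (T x)) :=
  sum_smul_jordan_weakMultiplier_general T U hT hU k
end

section
/- If T is a weak multiplier of A such that the linear span of the image T(A) intersects A₀ only in {0}, then T is a K-linear map, i.e., T(a•x + b•y) = a•T(x) + b•T(y) for all a, b ∈ K and x, y ∈ A. -/
/-- The two-sided annihilator `A₀` of `A`, the intersection of its left and right annihilators,
as a submodule: it is where the failure of linearity of a weak multiplier lies. -/
def twoSidedAnnihilator (K A : Type*) [Semiring K] [NonUnitalNonAssocSemiring A] [Module K A]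
    [SMulCommClass K A A] [IsScalarTower K A A] : Submodule K A where
  carrier := {a | (∀ x, a * x = 0) ∧ ∀ x, x * a = 0}
  zero_mem' := ⟨zero_mul, mul_zero⟩
  add_mem' ha hb :=
    ⟨fun x ↦ by rw [add_mul, ha.1, hb.1, add_zero],
      fun x ↦ by rw [mul_add, ha.2, hb.2, add_zero]⟩
  smul_mem' c _ ha :=
    ⟨fun x ↦ by rw [smul_mul_assoc, ha.1, smul_zero],
      fun x ↦ by rw [mul_smul_comm, ha.2, smul_zero]⟩

namespace IsWeakMultiplier

section LinearCombination

variable {K A : Type*} [SMul K A] [NonUnitalNonAssocSemiring A] {T : A → A}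

theorem map_smul_add_smul_mul [IsScalarTower K A A] (hT : IsWeakMultiplier T)
    (a b : K) (x y z : A) :
    T (a • x + b • y) * z = (a • T x + b • T y) * z :=
  calc
    T (a • x + b • y) * z = (a • x + b • y) * T z := (hT _ z).symm
    _ = a • (x * T z) + b • (y * T z) := by rw [add_mul, smul_mul_assoc, smul_mul_assoc]
    _ = a • (T x * z) + b • (T y * z) := by rw [hT x z, hT y z]
    _ = (a • T x + b • T y) * z := by rw [add_mul, smul_mul_assoc, smul_mul_assoc]

theorem mul_map_smul_add_smul [SMulCommClass K A A] (hT : IsWeakMultiplier T)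
    (a b : K) (x y z : A) :
    z * T (a • x + b • y) = z * (a • T x + b • T y) :=
  calc
    z * T (a • x + b • y) = T z * (a • x + b • y) := hT z _
    _ = a • (T z * x) + b • (T z * y) := by rw [mul_add, mul_smul_comm, mul_smul_comm]
    _ = a • (z * T x) + b • (z * T y) := by rw [hT z x, hT z y]
    _ = z * (a • T x + b • T y) := by rw [mul_add, mul_smul_comm, mul_smul_comm]

end LinearCombination

theorem map_smul_add_smul_sub_mem_twoSidedAnnihilator {K A : Type*} [Semiring K]
    [NonUnitalNonAssocRing A] [Module K A] [SMulCommClass K A A] [IsScalarTower K A A]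
    {T : A → A} (hT : IsWeakMultiplier T) (a b : K) (x y : A) :
    T (a • x + b • y) - (a • T x + b • T y) ∈ twoSidedAnnihilator K A :=
  ⟨fun z ↦ by rw [sub_mul, hT.map_smul_add_smul_mul, sub_self],
    fun z ↦ by rw [mul_sub, hT.mul_map_smul_add_smul, sub_self]⟩

end IsWeakMultiplier

theorem weakMultiplier_linear_of_span_inter_ann_eq_bot_general
    {K A : Type*} [Ring K] [NonUnitalNonAssocRing A] [Module K A]
    [SMulCommClass K A A] [IsScalarTower K A A]
    {T : A → A} (hT : IsWeakMultiplier T)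
    (h : Disjoint (Submodule.span K (Set.range T)) (twoSidedAnnihilator K A))
    (a b : K) (x y : A) : T (a • x + b • y) = a • T x + b • T y := by
  have map_mem_span (z : A) : T z ∈ Submodule.span K (Set.range T) :=
    Submodule.subset_span (Set.mem_range_self z)
  have defect_mem_span :
      T (a • x + b • y) - (a • T x + b • T y) ∈ Submodule.span K (Set.range T) :=
    sub_mem (map_mem_span _)
      (add_mem (Submodule.smul_mem _ a (map_mem_span x)) (Submodule.smul_mem _ b (map_mem_span y)))
  exact sub_eq_zero.mp <| Submodule.disjoint_def.mp h _ defect_mem_span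
    (hT.map_smul_add_smul_sub_mem_twoSidedAnnihilator a b x y)

theorem weakMultiplier_linear_of_span_inter_ann_eq_bot
    {K A : Type*} [Field K] [NonUnitalNonAssocRing A] [Module K A]
    [SMulCommClass K A A] [IsScalarTower K A A]
    (T : A → A) (hT : IsWeakMultiplier T)
    (h : (Submodule.span K (Set.range T) : Set A) ∩
          {a : A | (∀ x : A, a * x = 0) ∧ (∀ x : A, x * a = 0)} ⊆ {0}) :
    ∀ (a b : K) (x y : A), T (a • x + b • y) = a • T x + b • T y :=
  weakMultiplier_linear_of_span_inter_ann_eq_bot_general hT <|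
    Submodule.disjoint_def.mpr fun _ hspan hann ↦ h ⟨hspan, hann⟩
end

section
/- Suppose A = A₁ ⊕ A₀ is a nihil decomposition in which A₁ is a subalgebra of A (closed under multiplication), let π : A → A₁ be the projection onto A₁ along A₀, and for S : A₁ → A₁ let Φ(S) : A → A be the map x ↦ S(π(x)) (viewed in A). Then S is a weak multiplier of the algebra A₁ if and only if Φ(S) is a weak multiplier of A, and S is a multiplier of A₁ if and only if Φ(S) is a multiplier of A; moreover Φ(S ∘ S') = Φ(S) ∘ Φ(S') for all S, S' : A₁ → A₁. -/
/-- A function `T : A → A` is a multiplier of `A` if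
`x * T y = T (x * y) = T x * y` for all `x, y`. -/
def IsMultiplier {A : Type*} [Mul A] (T : A → A) : Prop :=
  ∀ x y : A, x * T y = T (x * y) ∧ T (x * y) = T x * y

/-- `S` (regarded as a map `A₁ → A₁`) is a weak multiplier of the
subalgebra `A₁` with the induced multiplication. -/
def IsWeakMultiplierOn {A : Type*} [Mul A] (A₁ : Set A) (S : A → A) : Prop :=
  ∀ x ∈ A₁, ∀ y ∈ A₁, x * S y = S x * y

/-- `S` (regarded as a map `A₁ → A₁`) is a multiplier of the
subalgebra `A₁` with the induced multiplication. -/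
def IsMultiplierOn {A : Type*} [Mul A] (A₁ : Set A) (S : A → A) : Prop :=
  ∀ x ∈ A₁, ∀ y ∈ A₁, x * S y = S (x * y) ∧ S (x * y) = S x * y

/-- A retraction `π` of a magma `A` onto a subset `A₁` under which products are invariant. It
abstracts the projection of a nihil decomposition `A = A₁ ⊕ A₀` onto `A₁`: the additive condition
that `x - π x` annihilates `A` is replaced by its multiplicative consequences `π x * y = x * y` and
`x * π y = x * y`. -/
structure IsNihilRetraction {A : Type*} [Mul A] (A₁ : Set A) (π : A → A) : Prop where
  mem : ∀ x, π x ∈ A₁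
  eq_self : ∀ x ∈ A₁, π x = x
  apply_mul : ∀ x y, π x * y = x * y
  mul_apply : ∀ x y, x * π y = x * y

namespace IsNihilRetraction

section Mul

variable {A : Type*} [Mul A] {A₁ : Set A} {π S S' : A → A}

theorem mul_mem (hπ : IsNihilRetraction A₁ π) (hmul : ∀ x ∈ A₁, ∀ y ∈ A₁, x * y ∈ A₁) (x y : A) :
    x * y ∈ A₁ := by
  have hxy : π x * π y = x * y := by rw [hπ.apply_mul, hπ.mul_apply]
  exact hxy ▸ hmul _ (hπ.mem x) _ (hπ.mem y)

theorem map_mul_eq_self (hπ : IsNihilRetraction A₁ π) (hmul : ∀ x ∈ A₁, ∀ y ∈ A₁, x * y ∈ A₁)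
    (x y : A) : π (x * y) = x * y :=
  hπ.eq_self _ (hπ.mul_mem hmul x y)

theorem isWeakMultiplierOn_iff (hπ : IsNihilRetraction A₁ π) :
    IsWeakMultiplierOn A₁ S ↔ IsWeakMultiplier (fun x => S (π x)) where
  mp h x y := calc
    x * S (π y) = π x * S (π y) := (hπ.apply_mul _ _).symm
    _ = S (π x) * π y := h _ (hπ.mem x) _ (hπ.mem y)
    _ = S (π x) * y := hπ.mul_apply _ _
  mpr h x hx y hy := by simpa only [hπ.eq_self x hx, hπ.eq_self y hy] using h x y

theorem isMultiplierOn_iff (hπ : IsNihilRetraction A₁ π)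
    (hmul : ∀ x ∈ A₁, ∀ y ∈ A₁, x * y ∈ A₁) :
    IsMultiplierOn A₁ S ↔ IsMultiplier (fun x => S (π x)) where
  mp h x y := by
    simpa only [hπ.apply_mul, hπ.mul_apply, hπ.map_mul_eq_self hmul] using
      h _ (hπ.mem x) _ (hπ.mem y)
  mpr h x hx y hy := by
    simpa only [hπ.eq_self x hx, hπ.eq_self y hy, hπ.map_mul_eq_self hmul] using h x y

theorem comp_apply (hπ : IsNihilRetraction A₁ π) (hS' : ∀ x ∈ A₁, S' x ∈ A₁) (x : A) :
    S (S' (π x)) = S (π (S' (π x))) := by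
  rw [hπ.eq_self _ (hS' _ (hπ.mem x))]

end Mul

theorem of_disjoint {A : Type*} [NonUnitalNonAssocRing A] {A₁ A₀ : AddSubgroup A}
    (hA₀ : ∀ a ∈ A₀, (∀ x, a * x = 0) ∧ (∀ x, x * a = 0)) (hdisj : Disjoint A₁ A₀)
    {π : A → A} (hπ₁ : ∀ x, π x ∈ A₁) (hπ₀ : ∀ x, x - π x ∈ A₀) :
    IsNihilRetraction (A₁ : Set A) π where
  mem := hπ₁
  eq_self x hx := by
    have hzero : x - π x = 0 :=
      AddSubgroup.disjoint_def.mp hdisj (A₁.sub_mem hx (hπ₁ x)) (hπ₀ x)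
    exact (sub_eq_zero.mp hzero).symm
  apply_mul x y := by
    have hzero : x * y - π x * y = 0 := by rw [← sub_mul, (hA₀ _ (hπ₀ x)).1]
    exact (sub_eq_zero.mp hzero).symm
  mul_apply x y := by
    have hzero : x * y - x * π y = 0 := by rw [← mul_sub, (hA₀ _ (hπ₀ y)).2]
    exact (sub_eq_zero.mp hzero).symm

end IsNihilRetraction

theorem nihil_decomposition_Phi_multiplier_general {A : Type*} [Mul A] {A₁ : Set A} {π : A → A}
    (hπ : IsNihilRetraction A₁ π) (hmul : ∀ x ∈ A₁, ∀ y ∈ A₁, x * y ∈ A₁)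
    (S S' : A → A) (hS' : ∀ x ∈ A₁, S' x ∈ A₁) :
    (IsWeakMultiplierOn A₁ S ↔ IsWeakMultiplier (fun x => S (π x))) ∧
    (IsMultiplierOn A₁ S ↔ IsMultiplier (fun x => S (π x))) ∧
    (∀ x, S (S' (π x)) = S (π (S' (π x)))) :=
  ⟨hπ.isWeakMultiplierOn_iff, hπ.isMultiplierOn_iff hmul, hπ.comp_apply hS'⟩

theorem nihil_decomposition_Phi_multiplier
    {K A : Type*} [Field K] [NonUnitalNonAssocRing A] [Module K A]
    [SMulCommClass K A A] [IsScalarTower K A A]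
    (A₁ A₀ : Submodule K A)
    (hA₀ : (A₀ : Set A) = {a : A | (∀ x : A, a * x = 0) ∧ (∀ x : A, x * a = 0)})
    (hcompl : IsCompl A₁ A₀)
    (hmul : ∀ x ∈ A₁, ∀ y ∈ A₁, x * y ∈ A₁)
    (π : A → A) (hπ₁ : ∀ x : A, π x ∈ A₁) (hπ₀ : ∀ x : A, x - π x ∈ A₀)
    (S S' : A → A) (hS : ∀ x ∈ A₁, S x ∈ A₁) (hS' : ∀ x ∈ A₁, S' x ∈ A₁) :
    (IsWeakMultiplierOn (A₁ : Set A) S ↔ IsWeakMultiplier (fun x : A => S (π x))) ∧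
    (IsMultiplierOn (A₁ : Set A) S ↔ IsMultiplier (fun x : A => S (π x))) ∧
    (∀ x : A, S (S' (π x)) = S (π (S' (π x)))) := by
  have hdisj : Disjoint A₁.toAddSubgroup A₀.toAddSubgroup :=
    AddSubgroup.disjoint_def.mpr (Submodule.disjoint_def.mp hcompl.disjoint _)
  exact nihil_decomposition_Phi_multiplier_general
    (.of_disjoint (fun _ ha => hA₀.subset ha) hdisj hπ₁ hπ₀) hmul S S' hS'
end

section
/- Let A be an associative algebra over K with A₀ = {0}. Then every weak multiplier of A is a multiplier of A, and every weak multiplier of A is a K-linear map. -/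
/-!
When elements of `A` are determined by their products, `T w` is determined by the products
`T w * z` and `z * T w`. A weak multiplier moves to the other factor there, so these are
`w * T z` and `T z * w`, in which the argument `w` stands free of `T`. Hence the algebra axioms for
`A`, applied to `w`, become identities for `T w`.
-/

/-- A magma is weakly reductive, in the terminology of semigroup theory, if its elements are
determined by their left and right products. For a ring this says that the two-sided annihilator
`A₀` is zero, see `isWeaklyReductive_iff_ann_eq_bot`; the formulation without subtraction makes
sense for semigroups and semirings. -/
def IsWeaklyReductive (A : Type*) [Mul A] : Prop :=
  ∀ ⦃a b : A⦄, (∀ x, a * x = b * x) → (∀ x, x * a = x * b) → a = b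

theorem isWeaklyReductive_iff_ann_eq_bot {A : Type*} [NonUnitalNonAssocRing A] :
    IsWeaklyReductive A ↔
      {a : A | (∀ x : A, a * x = 0) ∧ (∀ x : A, x * a = 0)} = {0} := by
  rw [Set.eq_singleton_iff_unique_mem]
  constructor
  · intro hA
    exact ⟨⟨zero_mul, mul_zero⟩, fun a ⟨hl, hr⟩ =>
      hA (fun x => by rw [hl, zero_mul]) (fun x => by rw [hr, mul_zero])⟩
  · rintro ⟨-, h⟩ a b hl hr
    exact sub_eq_zero.mp <| h (a - b)
      ⟨fun x => by rw [sub_mul, hl, sub_self], fun x => by rw [mul_sub, hr, sub_self]⟩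

namespace IsWeakMultiplier

variable {A : Type*} {T : A → A}

theorem apply_eq_of_forall_mul_eq [Mul A] (hT : IsWeakMultiplier T) (hA : IsWeaklyReductive A)
    {w u : A} (hl : ∀ z, w * T z = u * z) (hr : ∀ z, T z * w = z * u) : T w = u :=
  hA (fun z => (hT w z).symm.trans (hl z)) (fun z => (hT z w).trans (hr z))

theorem map_mul [Semigroup A] (hT : IsWeakMultiplier T) (hA : IsWeaklyReductive A) (x y : A) :
    T (x * y) = T x * y := by
  refine hT.apply_eq_of_forall_mul_eq hA (fun z => ?_) (fun z => ?_)
  · calc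
      x * y * T z = x * (T y * z) := by rw [mul_assoc, hT y z]
      _ = T x * y * z := by rw [← mul_assoc, hT x y]
  · calc
      T z * (x * y) = z * T x * y := by rw [← mul_assoc, hT z x]
      _ = z * (T x * y) := mul_assoc _ _ _

theorem isMultiplier [Semigroup A] (hT : IsWeakMultiplier T) (hA : IsWeaklyReductive A) :
    IsMultiplier T := fun x y =>
  ⟨(hT x y).trans (hT.map_mul hA x y).symm, hT.map_mul hA x y⟩

theorem map_add [Distrib A] (hT : IsWeakMultiplier T) (hA : IsWeaklyReductive A) (x y : A) :
    T (x + y) = T x + T y :=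
  hT.apply_eq_of_forall_mul_eq hA
    (fun z => by rw [add_mul, add_mul, hT x z, hT y z])
    (fun z => by rw [mul_add, mul_add, hT z x, hT z y])

theorem map_smul {K : Type*} [Mul A] [SMul K A] [SMulCommClass K A A] [IsScalarTower K A A]
    (hT : IsWeakMultiplier T) (hA : IsWeaklyReductive A) (c : K) (x : A) :
    T (c • x) = c • T x :=
  hT.apply_eq_of_forall_mul_eq hA
    (fun z => by rw [smul_mul_assoc, smul_mul_assoc, hT x z])
    (fun z => by rw [mul_smul_comm, mul_smul_comm, hT z x])

end IsWeakMultiplier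

theorem assoc_weakMultiplier_eq_multiplier_of_ann_eq_bot_general
    {K A : Type*} [NonUnitalSemiring A] [SMul K A]
    [SMulCommClass K A A] [IsScalarTower K A A]
    (hA : IsWeaklyReductive A) (T : A → A) (hT : IsWeakMultiplier T) :
    IsMultiplier T ∧
    (∀ (a b : K) (x y : A), T (a • x + b • y) = a • T x + b • T y) :=
  ⟨hT.isMultiplier hA, fun a b x y => by
    rw [hT.map_add hA, hT.map_smul hA, hT.map_smul hA]⟩

theorem assoc_weakMultiplier_eq_multiplier_of_ann_eq_bot
    {K A : Type*} [Field K] [NonUnitalRing A] [Module K A]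
    [SMulCommClass K A A] [IsScalarTower K A A]
    (h : {a : A | (∀ x : A, a * x = 0) ∧ (∀ x : A, x * a = 0)} = {0})
    (T : A → A) (hT : IsWeakMultiplier T) :
    IsMultiplier T ∧
    (∀ (a b : K) (x y : A), T (a • x + b • y) = a • T x + b • T y) :=
  assoc_weakMultiplier_eq_multiplier_of_ann_eq_bot_general
    (isWeaklyReductive_iff_ann_eq_bot.mpr h) T hT
end
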